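/- The weight-one level-three Eisenstein series f = E_{1,3} satisfies the fourth-order nonlinear ODE: for every τ ∈ ℍ, ff''''(ff'' − 2(f')²) − f²(f''')² + 2f'(ff'' + 4(f')²)f''' − 9(f')²(f'')² = 0. -/

import Mathlib

open Complex

noncomputable section

/-- The normalized derivative `F' = (2πi)⁻¹ dF/dτ`. -/
def nderiv (F : ℂ → ℂ) : ℂ → ℂ := fun τ => (2 * Real.pi * Complex.I)⁻¹ * deriv F τ

/-- `q = e^{2πiτ}`. -/
def qq (τ : ℂ) : ℂ := Complex.exp (2 * Real.pi * Complex.I * τ)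

/-- The weight-one level-three Eisenstein series
`E_{1,3}(τ) = Σ_{(α,β)∈ℤ²} q^{α²−αβ+β²}`. -/
def E13 : ℂ → ℂ := fun τ => ∑' p : ℤ × ℤ, qq τ ^ (p.1 ^ 2 - p.1 * p.2 + p.2 ^ 2)

/-!
The series `f = E13` satisfies `f (-1 / (3 * τ)) = -i√3 τ f τ`: splitting the sum according to the
parity of `α` gives `f τ = θ τ * θ (3 * τ) + ϑ τ * ϑ (3 * τ)`, with the theta functions `θ`, `ϑ` of
`ℤ` and `ℤ + 1/2`, and Jacobi's functional equation applies to each of them. The derivatives of `f`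
transform with lower-order terms, but these cancel in the differential polynomial of the equation,
whose value `F` therefore transforms like a form of weight 16. The expansion
`f = 1 + 6q + 6q³ + 6q⁴ + O(q⁵)` shows that `F = q⁵ ψ(q)` with `ψ` holomorphic on the unit disc.

Put `y = Im τ`. The function `y⁸ ‖F‖ = y⁸ e^{-10πy} ‖ψ‖` is invariant under `τ ↦ τ + 1` and
`τ ↦ -1 / (3 * τ)`, and every orbit meets `y ≥ c = 0.27`, because `3 * (1/4 + c²) < 1`. Since
`8 / (10π) < c`, the weight `y⁸ e^{-10πy}` is still decreasing on a horizontal line slightly below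
`y = c`, and the maximum principle bounds `‖ψ‖` above that line by its values on it. Hence the
supremum `M` of `y⁸ ‖F‖` satisfies `M ≤ ρ * M` with `ρ < 1`, so `M = 0`.
-/

open Metric Set
open UpperHalfPlane (upperHalfPlaneSet isOpen_upperHalfPlaneSet)

/-! ### The variable `q` and the normalized derivative -/

lemma qq_eq_qParam (τ : ℂ) : qq τ = Function.Periodic.qParam 1 τ := by
  simp [qq, Function.Periodic.qParam]

lemma norm_qq (τ : ℂ) : ‖qq τ‖ = Real.exp (-(2 * Real.pi * τ.im)) := by
  rw [qq_eq_qParam, Function.Periodic.norm_qParam]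
  ring_nf

lemma qq_mem_ball {τ : ℂ} (hτ : 0 < τ.im) : qq τ ∈ ball (0 : ℂ) 1 := by
  rw [mem_ball_zero_iff, qq_eq_qParam]
  exact Function.Periodic.norm_qParam_lt_one one_pos hτ

lemma qq_add_int (τ : ℂ) (n : ℤ) : qq (τ + n) = qq τ := by
  rw [qq, qq, ← exp_periodic.int_mul n (2 * Real.pi * I * τ)]
  ring_nf

lemma qq_zpow (τ : ℂ) (n : ℤ) : qq τ ^ n = cexp (2 * Real.pi * I * τ * n) := by
  rw [qq, ← exp_int_mul, mul_comm]

lemma exists_qq_eq_of_norm_eq {q : ℂ} {y : ℝ} (hq : ‖q‖ = Real.exp (-(2 * Real.pi * y))) :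
    ∃ τ, qq τ = q ∧ τ.im = y := by
  have hq₀ : q ≠ 0 := norm_pos_iff.mp (hq ▸ Real.exp_pos _)
  refine ⟨Function.Periodic.invQParam 1 q, ?_, ?_⟩
  · rw [qq_eq_qParam, Function.Periodic.qParam_right_inv one_ne_zero hq₀]
  · rw [Function.Periodic.im_invQParam, hq, Real.log_exp]
    field_simp

lemma hasDerivAt_qq (τ : ℂ) : HasDerivAt qq (2 * Real.pi * I * qq τ) τ := by
  refine ((hasDerivAt_id τ).const_mul (2 * Real.pi * I)).cexp.congr_deriv ?_
  rw [id, mul_one, mul_comm, qq]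

lemma nderiv_congr {F G : ℂ → ℂ} (h : EqOn F G upperHalfPlaneSet) :
    EqOn (nderiv F) (nderiv G) upperHalfPlaneSet := fun _ hτ => by
  simp only [nderiv, (h.eventuallyEq_of_mem (isOpen_upperHalfPlaneSet.mem_nhds hτ)).deriv_eq]

lemma differentiableOn_nderiv {F : ℂ → ℂ} (hF : DifferentiableOn ℂ F upperHalfPlaneSet) :
    DifferentiableOn ℂ (nderiv F) upperHalfPlaneSet :=
  (hF.deriv isOpen_upperHalfPlaneSet).const_mul _

lemma differentiableOn_iterate_nderiv {F : ℂ → ℂ} (hF : DifferentiableOn ℂ F upperHalfPlaneSet)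
    (n : ℕ) : DifferentiableOn ℂ (nderiv^[n] F) upperHalfPlaneSet :=
  Function.Iterate.rec _ hF (fun _ => differentiableOn_nderiv) n

/-- The Euler operator `q d/dq`, which is what the normalized derivative becomes in terms of `q`. -/
def eulerOp (g : ℂ → ℂ) : ℂ → ℂ := fun q => q * deriv g q

lemma differentiableOn_eulerOp {g : ℂ → ℂ} (hg : DifferentiableOn ℂ g (ball 0 1)) :
    DifferentiableOn ℂ (eulerOp g) (ball 0 1) :=
  differentiableOn_id.mul (hg.deriv isOpen_ball)

lemma differentiableOn_comp_qq {g : ℂ → ℂ} (hg : DifferentiableOn ℂ g (ball 0 1)) :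
    DifferentiableOn ℂ (g ∘ qq) upperHalfPlaneSet :=
  hg.comp (fun τ _ => (hasDerivAt_qq τ).differentiableAt.differentiableWithinAt)
    fun _ hτ => qq_mem_ball hτ

lemma nderiv_comp_qq {g : ℂ → ℂ} (hg : DifferentiableOn ℂ g (ball 0 1)) :
    EqOn (nderiv (g ∘ qq)) (eulerOp g ∘ qq) upperHalfPlaneSet := fun τ hτ => by
  have hgq := (hg.differentiableAt (isOpen_ball.mem_nhds (qq_mem_ball hτ))).hasDerivAt
  rw [nderiv, (hgq.comp τ (hasDerivAt_qq τ)).deriv, Function.comp_apply, eulerOp]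
  field [two_pi_I_ne_zero]

lemma iterate_nderiv_comp_qq {g : ℂ → ℂ} (hg : DifferentiableOn ℂ g (ball 0 1)) (n : ℕ) :
    EqOn (nderiv^[n] (g ∘ qq)) (eulerOp^[n] g ∘ qq) upperHalfPlaneSet := by
  have hgn (m : ℕ) : DifferentiableOn ℂ (eulerOp^[m] g) (ball 0 1) :=
    Function.Iterate.rec _ hg (fun _ => differentiableOn_eulerOp) m
  induction n with
  | zero => exact fun _ _ => rfl
  | succ n ih =>
    rw [Function.iterate_succ_apply', Function.iterate_succ_apply']
    exact (nderiv_congr ih).trans (nderiv_comp_qq (hgn n))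

/-! ### Covariance of the derivatives under the Fricke involution -/

lemma im_neg_one_div_mul (N : ℝ) (τ : ℂ) :
    (-1 / (N * τ)).im = τ.im / (N * ‖τ‖ ^ 2) := by
  rw [neg_div, neg_im, one_div, inv_im, im_ofReal_mul, normSq_mul, normSq_ofReal,
    normSq_eq_norm_sq]
  rcases eq_or_ne N 0 with rfl | hN
  · simp
  · rw [neg_div, neg_neg, mul_assoc, mul_div_mul_left _ _ hN]

lemma ne_zero_of_im_pos {τ : ℂ} (hτ : 0 < τ.im) : τ ≠ 0 := by
  rintro rfl
  exact hτ.false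

lemma im_neg_one_div_mul_pos {N : ℝ} (hN : 0 < N) {τ : ℂ} (hτ : 0 < τ.im) :
    0 < (-1 / (N * τ)).im := by
  have := norm_pos_iff.mpr (ne_zero_of_im_pos hτ)
  rw [im_neg_one_div_mul]
  positivity

lemma nderiv_neg_one_div_mul {f : ℂ → ℂ} (hf : DifferentiableOn ℂ f upperHalfPlaneSet)
    {N : ℝ} (hN : 0 < N) {τ : ℂ} (hτ : 0 < τ.im) :
    nderiv f (-1 / (N * τ)) = N * τ ^ 2 * nderiv (fun z => f (-1 / (N * z))) τ := by
  have hτ₀ := ne_zero_of_im_pos hτ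
  have hN₀ : (N : ℂ) ≠ 0 := ofReal_ne_zero.mpr hN.ne'
  have hinv : HasDerivAt (fun z : ℂ => -1 / (N * z)) (N * τ ^ 2)⁻¹ τ := by
    refine ((hasDerivAt_const τ (-1 : ℂ)).fun_div ((hasDerivAt_id τ).const_mul (N : ℂ))
      (mul_ne_zero hN₀ hτ₀)).congr_deriv ?_
    simp only [id]
    field
  have hfW := (hf.differentiableAt (isOpen_upperHalfPlaneSet.mem_nhds
    (im_neg_one_div_mul_pos hN hτ))).hasDerivAt
  have hcomp : deriv (fun z => f (-1 / (N * z))) τ = _ := (hfW.comp τ hinv).deriv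
  rw [nderiv, nderiv, hcomp]
  field

/-- The coefficients `C(n, i) (k+i)(k+i+1)⋯(k+n-1)` occurring when the `n`-th derivative of a form
of weight `k` is transformed; defined by the recursion that differentiation produces. -/
def jetCoeff (k : ℕ) : ℕ → ℕ → ℕ
  | 0, 0 => 1
  | 0, _ + 1 => 0
  | n + 1, 0 => (k + n) * jetCoeff k n 0
  | n + 1, i + 1 => jetCoeff k n i + (k + n + i + 1) * jetCoeff k n (i + 1)

lemma jetCoeff_eq_zero_of_lt (k : ℕ) {n i : ℕ} (h : n < i) : jetCoeff k n i = 0 := by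
  induction n generalizing i with
  | zero => obtain ⟨i, rfl⟩ := Nat.exists_eq_succ_of_ne_zero h.ne'; rfl
  | succ n ih =>
    obtain ⟨i, rfl⟩ := Nat.exists_eq_succ_of_ne_zero (Nat.ne_zero_of_lt h)
    rw [jetCoeff, ih (by lia), ih (by lia), mul_zero, add_zero]

lemma sum_range_jetCoeff_succ (k n : ℕ) (κ τ : ℂ) (x : ℕ → ℂ) :
    ∑ i ∈ Finset.range (n + 2),
        jetCoeff k (n + 1) i * κ ^ (n + 1 - i) * τ ^ (k + (n + 1) + i) * x i =
      τ ^ 2 * ∑ i ∈ Finset.range (n + 1), jetCoeff k n i * κ ^ (n - i) *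
        (κ * ((k + n + i : ℕ) * τ ^ (k + n + i - 1)) * x i + τ ^ (k + n + i) * x (i + 1)) := by
  set b : ℕ → ℂ := fun i =>
    (k + n + i : ℕ) * jetCoeff k n i * κ ^ (n + 1 - i) * τ ^ (k + (n + 1) + i) * x i with hb
  have hb_top : b (n + 1) = 0 := by simp [hb, jetCoeff_eq_zero_of_lt k n.lt_succ_self]
  have hb_eq {i : ℕ} (hi : i ∈ Finset.range (n + 1)) :
      b i = τ ^ 2 * (jetCoeff k n i * κ ^ (n - i) *
        (κ * ((k + n + i : ℕ) * τ ^ (k + n + i - 1)) * x i)) := by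
    have hi : i ≤ n := Finset.mem_range_succ_iff.mp hi
    rcases Nat.eq_zero_or_pos (k + n + i) with h | h
    · simp only [hb, h, Nat.cast_zero, zero_mul, mul_zero]
    · obtain ⟨e, he⟩ := Nat.exists_eq_succ_of_ne_zero h.ne'
      have he' : k + (n + 1) + i = e + 2 := by omega
      simp only [hb, he, he', Nat.succ_sub hi, Nat.succ_sub_one, pow_succ]
      ring
  calc ∑ i ∈ Finset.range (n + 2),
        jetCoeff k (n + 1) i * κ ^ (n + 1 - i) * τ ^ (k + (n + 1) + i) * x i
      = ∑ i ∈ Finset.range (n + 1),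
          (jetCoeff k n i * κ ^ (n - i) * τ ^ (k + n + i + 2) * x (i + 1) + b (i + 1)) + b 0 := by
        rw [Finset.sum_range_succ']
        congr 1
        · refine Finset.sum_congr rfl fun i _ => ?_
          simp only [hb, jetCoeff, Nat.add_sub_add_right]
          push_cast
          ring
        · simp only [hb, jetCoeff]
          push_cast
          ring
    _ = ∑ i ∈ Finset.range (n + 1),
          (jetCoeff k n i * κ ^ (n - i) * τ ^ (k + n + i + 2) * x (i + 1) + b i) := by
        rw [Finset.sum_add_distrib, add_assoc, ← Finset.sum_range_succ' b, Finset.sum_range_succ b,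
          hb_top, add_zero, Finset.sum_add_distrib]
    _ = _ := by
        rw [Finset.mul_sum]
        refine Finset.sum_congr rfl fun i hi => ?_
        rw [hb_eq hi]
        ring

lemma nderiv_sum_const_mul_pow_mul {ι : Type*} (s : Finset ι) (a : ι → ℂ) (e : ι → ℕ)
    {f : ι → ℂ → ℂ} {τ : ℂ} (hf : ∀ i ∈ s, DifferentiableAt ℂ (f i) τ) :
    nderiv (fun z => ∑ i ∈ s, a i * z ^ e i * f i z) τ =
      ∑ i ∈ s, a i * ((2 * Real.pi * I)⁻¹ * (e i * τ ^ (e i - 1)) * f i τ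
        + τ ^ e i * nderiv (f i) τ) := by
  have hterm (i : ι) (hi : i ∈ s) : HasDerivAt (fun z => a i * z ^ e i * f i z)
      (a i * (e i * τ ^ (e i - 1)) * f i τ + a i * τ ^ e i * deriv (f i) τ) τ :=
    ((hasDerivAt_pow (e i) τ).const_mul (a i)).fun_mul (hf i hi).hasDerivAt
  rw [nderiv, (HasDerivAt.fun_sum hterm).deriv, Finset.mul_sum]
  refine Finset.sum_congr rfl fun i _ => ?_
  rw [nderiv]
  ring

theorem iterate_nderiv_neg_one_div_mul {f : ℂ → ℂ} (hf : DifferentiableOn ℂ f upperHalfPlaneSet)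
    {N : ℝ} (hN : 0 < N) {c : ℂ} {k : ℕ}
    (hfW : ∀ τ : ℂ, 0 < τ.im → f (-1 / (N * τ)) = c * τ ^ k * f τ) (n : ℕ) {τ : ℂ}
    (hτ : 0 < τ.im) :
    nderiv^[n] f (-1 / (N * τ)) = ∑ i ∈ Finset.range (n + 1),
      c * N ^ n * (jetCoeff k n i * (2 * Real.pi * I)⁻¹ ^ (n - i)) * τ ^ (k + n + i) *
        nderiv^[i] f τ := by
  have hdiff (i : ℕ) {τ : ℂ} (hτ : 0 < τ.im) : DifferentiableAt ℂ (nderiv^[i] f) τ :=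
    (differentiableOn_iterate_nderiv hf i).differentiableAt (isOpen_upperHalfPlaneSet.mem_nhds hτ)
  induction n generalizing τ with
  | zero => simp [hfW τ hτ, jetCoeff]
  | succ n ih =>
    set κ : ℂ := (2 * Real.pi * I)⁻¹
    rw [Function.iterate_succ_apply',
      nderiv_neg_one_div_mul (differentiableOn_iterate_nderiv hf n) hN hτ,
      nderiv_congr (fun _ => ih) hτ,
      nderiv_sum_const_mul_pow_mul _ _ (fun i => k + n + i) fun i _ => hdiff i hτ]
    calc N * τ ^ 2 * ∑ i ∈ Finset.range (n + 1), c * N ^ n * (jetCoeff k n i * κ ^ (n - i)) *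
          (κ * ((k + n + i : ℕ) * τ ^ (k + n + i - 1)) * nderiv^[i] f τ
            + τ ^ (k + n + i) * nderiv (nderiv^[i] f) τ)
        = c * N ^ (n + 1) * (τ ^ 2 * ∑ i ∈ Finset.range (n + 1), jetCoeff k n i * κ ^ (n - i) *
          (κ * ((k + n + i : ℕ) * τ ^ (k + n + i - 1)) * nderiv^[i] f τ
            + τ ^ (k + n + i) * nderiv^[i + 1] f τ)) := by
          simp only [Finset.mul_sum, Function.iterate_succ_apply']
          exact Finset.sum_congr rfl fun i _ => by ring
      _ = _ := by
          rw [← sum_range_jetCoeff_succ k n κ τ fun i => nderiv^[i] f τ, Finset.mul_sum]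
          exact Finset.sum_congr rfl fun i _ => by ring

/-! ### Power series with prescribed exponents, truncated -/

/-- `EqModPow n g p`: on the unit disc, the holomorphic function `g` agrees with the polynomial `p`
modulo `q ^ n`, the cofactor being holomorphic. -/
def EqModPow (n : ℕ) (g : ℂ → ℂ) (p : Polynomial ℂ) : Prop :=
  ∃ ψ, DifferentiableOn ℂ ψ (ball 0 1) ∧ EqOn g (fun q => p.eval q + q ^ n * ψ q) (ball 0 1)

namespace EqModPow

variable {n : ℕ} {g h : ℂ → ℂ} {p r : Polynomial ℂ}

lemma ofNat (n a : ℕ) [a.AtLeastTwo] : EqModPow n ofNat(a) ofNat(a) :=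
  ⟨0, differentiableOn_const 0, fun q _ => by simp⟩

lemma one (n : ℕ) : EqModPow n 1 1 :=
  ⟨0, differentiableOn_const 0, fun q _ => by simp⟩

lemma differentiableOn (hg : EqModPow n g p) : DifferentiableOn ℂ g (ball 0 1) := by
  obtain ⟨ψ, hψ, hgψ⟩ := hg
  exact (p.differentiableOn.add ((differentiableOn_id.pow n).mul hψ)).congr hgψ

lemma add (hg : EqModPow n g p) (hh : EqModPow n h r) : EqModPow n (g + h) (p + r) := by
  obtain ⟨ψ, hψ, hgψ⟩ := hg
  obtain ⟨φ, hφ, hhφ⟩ := hh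
  refine ⟨ψ + φ, hψ.add hφ, fun q hq => ?_⟩
  simp only [Pi.add_apply, hgψ hq, hhφ hq, Polynomial.eval_add]
  ring

lemma sub (hg : EqModPow n g p) (hh : EqModPow n h r) : EqModPow n (g - h) (p - r) := by
  obtain ⟨ψ, hψ, hgψ⟩ := hg
  obtain ⟨φ, hφ, hhφ⟩ := hh
  refine ⟨ψ - φ, hψ.sub hφ, fun q hq => ?_⟩
  simp only [Pi.sub_apply, hgψ hq, hhφ hq, Polynomial.eval_sub]
  ring

lemma mul (hg : EqModPow n g p) (hh : EqModPow n h r) : EqModPow n (g * h) (p * r) := by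
  have hh_diff := hh.differentiableOn
  obtain ⟨ψ, hψ, hgψ⟩ := hg
  obtain ⟨φ, hφ, hhφ⟩ := hh
  refine ⟨fun q => p.eval q * φ q + ψ q * h q,
    (p.differentiableOn.mul hφ).add (hψ.mul hh_diff), fun q hq => ?_⟩
  simp only [Pi.mul_apply, hgψ hq, hhφ hq, Polynomial.eval_mul]
  ring

lemma pow (hg : EqModPow n g p) (m : ℕ) : EqModPow n (g ^ m) (p ^ m) := by
  induction m with
  | zero => simpa only [pow_zero] using one n
  | succ m ih => simpa only [pow_succ] using ih.mul hg

lemma eulerOp (hg : EqModPow n g p) :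
    EqModPow n (eulerOp g) (Polynomial.X * Polynomial.derivative p) := by
  obtain ⟨ψ, hψ, hgψ⟩ := hg
  refine ⟨fun q => n * ψ q + q * deriv ψ q,
    (hψ.const_mul _).add (differentiableOn_id.mul (hψ.deriv isOpen_ball)), fun q hq => ?_⟩
  have hψq := (hψ.differentiableAt (isOpen_ball.mem_nhds hq)).hasDerivAt
  have hderiv := (p.hasDerivAt q).fun_add ((hasDerivAt_pow n q).fun_mul hψq)
  rw [_root_.eulerOp, (hgψ.eventuallyEq_of_mem (isOpen_ball.mem_nhds hq)).deriv_eq, hderiv.deriv]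
  simp only [Polynomial.eval_mul, Polynomial.eval_X]
  rcases n with _ | n
  · simp only [Nat.cast_zero]
    ring
  · rw [Nat.add_sub_cancel]
    ring

lemma iterate_eulerOp (hg : EqModPow n g p) (k : ℕ) :
    EqModPow n (_root_.eulerOp^[k] g)
      ((fun p => Polynomial.X * Polynomial.derivative p)^[k] p) := by
  induction k with
  | zero => exact hg
  | succ k ih =>
    rw [Function.iterate_succ_apply', Function.iterate_succ_apply']
    exact ih.eulerOp

end EqModPow

section TsumPow

variable {ι : Type*} {e : ι → ℕ}

lemma differentiableOn_tsum_pow (he : ∀ r : ℝ, 0 < r → r < 1 → Summable fun i => r ^ e i) :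
    DifferentiableOn ℂ (fun q : ℂ => ∑' i, q ^ e i) (ball 0 1) := by
  intro q hq
  obtain ⟨r, hqr, hr⟩ := exists_between (mem_ball_zero_iff.mp hq)
  have hdiff : DifferentiableOn ℂ (fun q : ℂ => ∑' i, q ^ e i) (ball 0 r) := by
    refine differentiableOn_tsum_of_summable_norm (he r ((norm_nonneg q).trans_lt hqr) hr)
      (fun i => differentiableOn_id.pow _) isOpen_ball fun i w hw => ?_
    rw [norm_pow]
    exact pow_le_pow_left₀ (norm_nonneg w) (mem_ball_zero_iff.mp hw).le _
  exact (hdiff.differentiableAt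
    (isOpen_ball.mem_nhds (mem_ball_zero_iff.mpr hqr))).differentiableWithinAt

lemma summable_pow_of_norm_lt_one (he : ∀ r : ℝ, 0 < r → r < 1 → Summable fun i => r ^ e i)
    {q : ℂ} (hq : ‖q‖ < 1) : Summable fun i => q ^ e i := by
  obtain ⟨r, hqr, hr⟩ := exists_between hq
  refine (he r ((norm_nonneg q).trans_lt hqr) hr).of_norm_bounded fun i => ?_
  rw [norm_pow]
  exact pow_le_pow_left₀ (norm_nonneg q) hqr.le _

lemma eqModPow_tsum_pow (he : ∀ r : ℝ, 0 < r → r < 1 → Summable fun i => r ^ e i) {n : ℕ}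
    (s : Finset ι) (hs : ∀ i ∉ s, n ≤ e i) :
    EqModPow n (fun q => ∑' i, q ^ e i) (∑ i ∈ s, Polynomial.X ^ e i) := by
  have hshift (r : ℝ) (hr₀ : 0 < r) (hr₁ : r < 1) :
      Summable fun i : {i // i ∉ s} => r ^ (e i - n) := by
    refine (((he r hr₀ hr₁).subtype _).mul_right (r ^ n)⁻¹).congr fun i => ?_
    exact (pow_sub₀ r hr₀.ne' (hs i i.2)).symm
  refine ⟨_, differentiableOn_tsum_pow hshift, fun q hq => ?_⟩
  have hsum := summable_pow_of_norm_lt_one he (mem_ball_zero_iff.mp hq)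
  simp only [Polynomial.eval_finsetSum, Polynomial.eval_pow, Polynomial.eval_X]
  rw [← hsum.sum_add_tsum_subtype_compl s, ← tsum_mul_left]
  congr 1
  refine tsum_congr fun i => ?_
  rw [← pow_add, Nat.add_sub_cancel' (hs i i.2)]

end TsumPow

/-! ### The `q`-expansion of `E13` -/

/-- The norm form `α² - αβ + β²` of the Eisenstein integers, with values in `ℕ`. -/
def normForm (p : ℤ × ℤ) : ℕ := (p.1 ^ 2 - p.1 * p.2 + p.2 ^ 2).toNat

lemma coe_normForm (p : ℤ × ℤ) : (normForm p : ℤ) = p.1 ^ 2 - p.1 * p.2 + p.2 ^ 2 :=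
  Int.toNat_of_nonneg (by nlinarith [sq_nonneg (p.1 - p.2), sq_nonneg (p.1 + p.2)])

lemma natAbs_add_natAbs_le_two_mul_normForm (p : ℤ × ℤ) :
    p.1.natAbs + p.2.natAbs ≤ 2 * normForm p := by
  zify
  rw [coe_normForm, Int.abs_eq_natAbs, Int.abs_eq_natAbs]
  nlinarith [Int.natAbs_le_self_sq p.1, Int.natAbs_le_self_sq p.2, sq_nonneg (p.1 - p.2)]

lemma summable_pow_normForm (r : ℝ) (hr₀ : 0 < r) (hr₁ : r < 1) :
    Summable fun p => r ^ normForm p := by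
  have hs₀ : 0 ≤ √r := Real.sqrt_nonneg r
  have hs₁ : √r < 1 := by rwa [Real.sqrt_lt' one_pos, one_pow]
  have hgeom : Summable fun n : ℤ => √r ^ n.natAbs :=
    .of_nat_of_neg (by simpa using summable_geometric_of_lt_one hs₀ hs₁)
      (by simpa using summable_geometric_of_lt_one hs₀ hs₁)
  refine (hgeom.mul_of_nonneg hgeom (fun _ => by positivity) (fun _ => by positivity)
    ).of_nonneg_of_le (fun _ => by positivity) fun p => ?_
  calc r ^ normForm p = √r ^ (2 * normForm p) := by rw [pow_mul, Real.sq_sqrt hr₀.le]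
    _ ≤ √r ^ (p.1.natAbs + p.2.natAbs) :=
      pow_le_pow_of_le_one hs₀ hs₁.le (natAbs_add_natAbs_le_two_mul_normForm p)
    _ = √r ^ p.1.natAbs * √r ^ p.2.natAbs := pow_add _ _ _

/-- The function on the unit disc with `E13 τ = E13Disc (q τ)`. -/
def E13Disc (q : ℂ) : ℂ := ∑' p, q ^ normForm p

lemma E13_eq_E13Disc_comp_qq : E13 = E13Disc ∘ qq := by
  funext τ
  simp only [E13, E13Disc, Function.comp_apply, ← coe_normForm, zpow_natCast]

lemma differentiableOn_E13Disc : DifferentiableOn ℂ E13Disc (ball 0 1) :=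
  differentiableOn_tsum_pow summable_pow_normForm

lemma differentiableOn_E13 : DifferentiableOn ℂ E13 upperHalfPlaneSet :=
  E13_eq_E13Disc_comp_qq ▸ differentiableOn_comp_qq differentiableOn_E13Disc

lemma summable_E13 {τ : ℂ} (hτ : 0 < τ.im) :
    Summable fun p : ℤ × ℤ => qq τ ^ (p.1 ^ 2 - p.1 * p.2 + p.2 ^ 2) := by
  simpa only [← coe_normForm, zpow_natCast] using
    summable_pow_of_norm_lt_one summable_pow_normForm (mem_ball_zero_iff.mp (qq_mem_ball hτ))

lemma mem_Icc_of_normForm_lt_five {p : ℤ × ℤ} (hp : normForm p < 5) :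
    p ∈ Finset.Icc (-2) 2 ×ˢ Finset.Icc (-2) 2 := by
  have hp : p.1 ^ 2 - p.1 * p.2 + p.2 ^ 2 ≤ 4 := by rw [← coe_normForm]; lia
  have h₁ : 3 * p.1 ^ 2 ≤ 16 := by nlinarith [sq_nonneg (p.1 - 2 * p.2)]
  have h₂ : 3 * p.2 ^ 2 ≤ 16 := by nlinarith [sq_nonneg (2 * p.1 - p.2)]
  simp only [Finset.mem_product, Finset.mem_Icc]
  refine ⟨⟨?_, ?_⟩, ?_, ?_⟩ <;> nlinarith

open Polynomial in
/-- The `q`-expansion of `E13` up to and including the term in `q ^ 4`. -/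
def E13Trunc : ℂ[X] := 1 + 6 * X + 6 * X ^ 3 + 6 * X ^ 4

open Polynomial in
lemma eqModPow_E13Disc : EqModPow 5 E13Disc E13Trunc := by
  set s := {p ∈ Finset.Icc (-2) 2 ×ˢ Finset.Icc (-2) 2 | normForm p < 5}
  have hlow : ∑ p ∈ s, (X : ℂ[X]) ^ normForm p = E13Trunc := by
    have hvals : s.val.map normForm =
        {0} + Multiset.replicate 6 1 + Multiset.replicate 6 3 + Multiset.replicate 6 4 := by decide
    rw [Finset.sum, ← Function.comp_def (fun n => (X : ℂ[X]) ^ n), ← Multiset.map_map, hvals]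
    simp only [Multiset.map_add, Multiset.map_singleton, Multiset.map_replicate, Multiset.sum_add,
      Multiset.sum_singleton, Multiset.sum_replicate, nsmul_eq_mul, Nat.cast_ofNat, pow_zero,
      pow_one, E13Trunc]
  rw [← hlow]
  refine eqModPow_tsum_pow summable_pow_normForm s fun p hp => ?_
  contrapose! hp
  exact Finset.mem_filter.mpr ⟨mem_Icc_of_normForm_lt_five hp, hp⟩

/-! ### Theta functions and the Fricke involution of `E13` -/

/-- The theta function `∑ q ^ (n ^ 2)` over `n ∈ ℤ`, `q = e^{2πiτ}`. -/
def thetaInt (τ : ℂ) : ℂ := jacobiTheta₂ 0 (2 * τ)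

/-- The theta function `∑ q ^ ((n + 1/2) ^ 2)` over `n ∈ ℤ`, `q = e^{2πiτ}`. -/
def thetaHalf (τ : ℂ) : ℂ := cexp (Real.pi * I * τ / 2) * jacobiTheta₂ τ (2 * τ)

section Theta

variable {τ : ℂ}

lemma hasSum_thetaInt (hτ : 0 < τ.im) :
    HasSum (fun n : ℤ => cexp (2 * Real.pi * I * τ * n ^ 2)) (thetaInt τ) := by
  refine (hasSum_jacobiTheta₂_term 0 (τ := 2 * τ) (by simpa using hτ)).congr_fun fun n => ?_
  rw [jacobiTheta₂_term]
  ring_nf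

lemma hasSum_thetaHalf (hτ : 0 < τ.im) :
    HasSum (fun n : ℤ => cexp (2 * Real.pi * I * τ * (n + 1 / 2) ^ 2)) (thetaHalf τ) := by
  refine ((hasSum_jacobiTheta₂_term τ (τ := 2 * τ) (by simpa using hτ)).mul_left
    (cexp (Real.pi * I * τ / 2))).congr_fun fun n => ?_
  rw [jacobiTheta₂_term, ← exp_add]
  ring_nf

lemma hasSum_int_of_even_of_odd {M : Type*} [AddCommMonoid M] [TopologicalSpace M]
    [ContinuousAdd M] {f : ℤ → M} {a b : M} (ha : HasSum (fun n => f (2 * n)) a)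
    (hb : HasSum (fun n => f (2 * n + 1)) b) : HasSum f (a + b) := by
  have heven := mul_right_injective₀ (two_ne_zero' ℤ)
  replace ha := heven.hasSum_range_iff.2 ha
  replace hb := ((add_left_injective 1).comp heven).hasSum_range_iff.2 hb
  exact ha.add_isCompl (by simpa [Function.comp_def] using Int.isCompl_even_odd) hb

lemma jacobiTheta₂_zero_half (hτ : 0 < τ.im) :
    jacobiTheta₂ 0 (τ / 2) = thetaInt τ + thetaHalf τ := by
  refine (hasSum_jacobiTheta₂_term 0 (by simpa using hτ)).unique
    (hasSum_int_of_even_of_odd ?_ ?_)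
  · refine (hasSum_thetaInt hτ).congr_fun fun n => ?_
    rw [jacobiTheta₂_term]
    push_cast
    ring_nf
  · refine (hasSum_thetaHalf hτ).congr_fun fun n => ?_
    rw [jacobiTheta₂_term]
    push_cast
    ring_nf

lemma jacobiTheta₂_one_half_half (hτ : 0 < τ.im) :
    jacobiTheta₂ (1 / 2) (τ / 2) = thetaInt τ - thetaHalf τ := by
  rw [sub_eq_add_neg]
  refine (hasSum_jacobiTheta₂_term (1 / 2) (by simpa using hτ)).unique
    (hasSum_int_of_even_of_odd ?_ ?_)
  · refine (hasSum_thetaInt hτ).congr_fun fun n => ?_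
    rw [jacobiTheta₂_term, ← exp_periodic.int_mul n (2 * Real.pi * I * τ * n ^ 2)]
    push_cast
    ring_nf
  · refine (hasSum_thetaHalf hτ).neg.congr_fun fun n => ?_
    rw [jacobiTheta₂_term, ← exp_periodic.int_mul n (2 * Real.pi * I * τ * (n + 1 / 2) ^ 2),
      ← mul_neg_one, ← exp_pi_mul_I, ← exp_add]
    push_cast
    ring_nf

lemma neg_I_mul_half_cpow_ne_zero (hτ : 0 < τ.im) : (-I * (τ / 2)) ^ (1 / 2 : ℂ) ≠ 0 := by
  simp [cpow_eq_zero_iff, ne_zero_of_im_pos hτ]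

lemma thetaInt_neg_one_div (hτ : 0 < τ.im) :
    thetaInt (-1 / τ) = (-I * (τ / 2)) ^ (1 / 2 : ℂ) * (thetaInt τ + thetaHalf τ) := by
  have hτ₀ := ne_zero_of_im_pos hτ
  have hroot := neg_I_mul_half_cpow_ne_zero hτ
  have harg : 2 * (-1 / τ) = -1 / (τ / 2) := by field
  rw [← jacobiTheta₂_zero_half hτ, jacobiTheta₂_functional_equation, thetaInt, harg]
  simp only [zero_div, ne_eq, OfNat.ofNat_ne_zero, not_false_eq_true, zero_pow, mul_zero, exp_zero]
  field

lemma thetaHalf_neg_one_div (hτ : 0 < τ.im) :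
    thetaHalf (-1 / τ) = (-I * (τ / 2)) ^ (1 / 2 : ℂ) * (thetaInt τ - thetaHalf τ) := by
  have hτ₀ := ne_zero_of_im_pos hτ
  have hroot := neg_I_mul_half_cpow_ne_zero hτ
  have harg : 2 * (-1 / τ) = -1 / (τ / 2) := by field
  have hz : 1 / 2 / (τ / 2) = -(-1 / τ) := by field
  have hexp : -Real.pi * I * (1 / 2) ^ 2 / (τ / 2) = Real.pi * I * (-1 / τ) / 2 := by field
  rw [← jacobiTheta₂_one_half_half hτ, jacobiTheta₂_functional_equation, thetaHalf, harg, hz, hexp,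
    jacobiTheta₂_neg_left]
  field

lemma ofReal_mul_cpow {r : ℝ} (hr : 0 < r) {z : ℂ} (hz : z ≠ 0) (a : ℂ) :
    (r * z) ^ a = (r : ℂ) ^ a * z ^ a := by
  have hr₀ : (r : ℂ) ≠ 0 := ofReal_ne_zero.mpr hr.ne'
  rw [cpow_def_of_ne_zero (mul_ne_zero hr₀ hz), cpow_def_of_ne_zero hr₀, cpow_def_of_ne_zero hz,
    log_ofReal_mul hr hz, ofReal_log hr.le, add_mul, exp_add]

lemma ofReal_mul_cpow_half_mul_cpow_half {r : ℝ} (hr : 0 < r) {z : ℂ} (hz : z ≠ 0) :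
    (r * z) ^ (1 / 2 : ℂ) * z ^ (1 / 2 : ℂ) = √r * z := by
  have hroot : (r : ℂ) ^ (1 / 2 : ℂ) = √r := by
    rw [Real.sqrt_eq_rpow, ofReal_cpow hr.le, ofReal_div, ofReal_one, ofReal_ofNat]
  rw [ofReal_mul_cpow hr hz, hroot, mul_assoc, ← sq, one_div, cpow_ofNat_inv_pow]

lemma hasSum_E13_even (hτ : 0 < τ.im) (n : ℤ) :
    HasSum (fun m : ℤ => qq τ ^ ((2 * n) ^ 2 - 2 * n * m + m ^ 2))
      (thetaInt τ * cexp (2 * Real.pi * I * (3 * τ) * n ^ 2)) := by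
  refine (((Equiv.subRight n).hasSum_iff.mpr (hasSum_thetaInt hτ)).mul_right _).congr_fun
    fun m => ?_
  simp only [Function.comp_apply, Equiv.subRight_apply]
  rw [qq_zpow, ← exp_add]
  push_cast
  ring_nf

lemma hasSum_E13_odd (hτ : 0 < τ.im) (n : ℤ) :
    HasSum (fun m : ℤ => qq τ ^ ((2 * n + 1) ^ 2 - (2 * n + 1) * m + m ^ 2))
      (thetaHalf τ * cexp (2 * Real.pi * I * (3 * τ) * (n + 1 / 2) ^ 2)) := by
  refine (((Equiv.subRight (n + 1)).hasSum_iff.mpr (hasSum_thetaHalf hτ)).mul_right _).congr_fun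
    fun m => ?_
  simp only [Function.comp_apply, Equiv.subRight_apply]
  rw [qq_zpow, ← exp_add]
  push_cast
  ring_nf

lemma E13_eq_theta (hτ : 0 < τ.im) :
    E13 τ = thetaInt τ * thetaInt (3 * τ) + thetaHalf τ * thetaHalf (3 * τ) := by
  have h3τ : 0 < (3 * τ).im := by simpa using hτ
  rw [E13, (summable_E13 hτ).tsum_prod]
  refine (hasSum_int_of_even_of_odd ?_ ?_).tsum_eq
  · simpa only [(hasSum_E13_even hτ _).tsum_eq] using (hasSum_thetaInt h3τ).mul_left (thetaInt τ)
  · simpa only [(hasSum_E13_odd hτ _).tsum_eq] using (hasSum_thetaHalf h3τ).mul_left (thetaHalf τ)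

theorem E13_neg_one_div (hτ : 0 < τ.im) :
    E13 (-1 / ((3 : ℝ) * τ)) = -(I * √3) * τ * E13 τ := by
  have h3τ : 0 < (3 * τ).im := by simpa using hτ
  have hW := im_neg_one_div_mul_pos three_pos hτ
  rw [ofReal_ofNat] at hW ⊢
  have hroot : (-I * (3 * τ / 2)) ^ (1 / 2 : ℂ) * (-I * (τ / 2)) ^ (1 / 2 : ℂ) =
      √3 * (-I * (τ / 2)) := by
    have hz : -I * (τ / 2) ≠ 0 := by simp [ne_zero_of_im_pos hτ]
    rw [← ofReal_mul_cpow_half_mul_cpow_half three_pos hz, ofReal_ofNat]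
    ring_nf
  have harg : 3 * (-1 / (3 * τ)) = -1 / τ := by
    have := ne_zero_of_im_pos hτ
    field
  rw [E13_eq_theta hW, E13_eq_theta hτ, harg, thetaInt_neg_one_div hτ, thetaHalf_neg_one_div hτ,
    thetaInt_neg_one_div h3τ, thetaHalf_neg_one_div h3τ]
  linear_combination
    2 * (thetaInt τ * thetaInt (3 * τ) + thetaHalf τ * thetaHalf (3 * τ)) * hroot

end Theta

/-! ### The differential polynomial -/

/-- The differential polynomial of the differential equation, evaluated at a jet `x`: the variable
`x i` stands for the `i`-th derivative. It is defined over any commutative ring, so as to apply to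
numbers, to functions of `q`, and to their polynomial truncations. -/
def odeForm {R : Type*} [CommRing R] (x : ℕ → R) : R :=
  x 0 * x 4 * (x 0 * x 2 - 2 * x 1 ^ 2) - x 0 ^ 2 * x 3 ^ 2 +
    2 * x 1 * (x 0 * x 2 + 4 * x 1 ^ 2) * x 3 - 9 * x 1 ^ 2 * x 2 ^ 2

lemma odeForm_neg_one_div_mul {f : ℂ → ℂ} (hf : DifferentiableOn ℂ f upperHalfPlaneSet)
    {N : ℝ} (hN : 0 < N) {c : ℂ} (hfW : ∀ τ : ℂ, 0 < τ.im → f (-1 / (N * τ)) = c * τ * f τ)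
    {τ : ℂ} (hτ : 0 < τ.im) :
    odeForm (fun i => nderiv^[i] f (-1 / (N * τ))) =
      c ^ 4 * N ^ 6 * τ ^ 16 * odeForm (fun i => nderiv^[i] f τ) := by
  have hjet := iterate_nderiv_neg_one_div_mul hf hN (k := 1) (by simpa only [pow_one] using hfW)
  simp only [odeForm, hjet _ hτ, Finset.sum_range_succ, Finset.sum_range_zero, jetCoeff]
  push_cast
  ring

lemma EqModPow.odeForm {n : ℕ} {x : ℕ → ℂ → ℂ} {p : ℕ → Polynomial ℂ}
    (h : ∀ i, EqModPow n (x i) (p i)) : EqModPow n (odeForm x) (odeForm p) :=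
  (((((h 0).mul (h 4)).mul (((h 0).mul (h 2)).sub ((ofNat n 2).mul ((h 1).pow 2)))).sub
    (((h 0).pow 2).mul ((h 3).pow 2))).add
    ((((ofNat n 2).mul (h 1)).mul (((h 0).mul (h 2)).add ((ofNat n 4).mul ((h 1).pow 2)))).mul
      (h 3))).sub (((ofNat n 9).mul ((h 1).pow 2)).mul ((h 2).pow 2))

section Truncation

open Polynomial

lemma iterate_succ_X_mul_derivative_E13Trunc (n : ℕ) :
    (fun p : ℂ[X] => X * derivative p)^[n + 1] E13Trunc =
      6 * X + 6 * 3 ^ (n + 1) * X ^ 3 + 6 * 4 ^ (n + 1) * X ^ 4 := by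
  induction n with
  | zero =>
    simp only [zero_add, Function.iterate_one, E13Trunc, derivative_add, derivative_mul,
      derivative_one, derivative_ofNat, derivative_X, derivative_X_pow, map_natCast]
    push_cast
    ring
  | succ n ih =>
    rw [Function.iterate_succ_apply', ih]
    simp only [derivative_add, derivative_mul, derivative_ofNat, derivative_X, derivative_pow,
      map_natCast]
    push_cast
    ring

lemma X_pow_five_dvd_odeForm_E13Trunc :
    (X : ℂ[X]) ^ 5 ∣ odeForm fun i => (fun p => X * derivative p)^[i] E13Trunc := by
  refine ⟨-127008 * X ^ 3 + 217728 * X ^ 4 + 248832 * X ^ 5 + 508032 * X ^ 6 + 594864 * X ^ 7 -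
    4250880 * X ^ 8 - 11788416 * X ^ 9 - 12628224 * X ^ 10 - 5308416 * X ^ 11, ?_⟩
  simp only [odeForm, Function.iterate_zero_apply, iterate_succ_X_mul_derivative_E13Trunc]
  rw [E13Trunc]
  ring

end Truncation

lemma exists_odeForm_E13_eq_qq_pow_five_mul :
    ∃ ψ, DifferentiableOn ℂ ψ (ball 0 1) ∧ ∀ τ : ℂ, 0 < τ.im →
      odeForm (fun i => nderiv^[i] E13 τ) = qq τ ^ 5 * ψ (qq τ) := by
  obtain ⟨ψ, hψ, hodeψ⟩ := EqModPow.odeForm fun i => eqModPow_E13Disc.iterate_eulerOp i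
  obtain ⟨p, hp⟩ := X_pow_five_dvd_odeForm_E13Trunc
  refine ⟨fun q => p.eval q + ψ q, p.differentiableOn.add hψ, fun τ hτ => ?_⟩
  have hE13 (i : ℕ) : nderiv^[i] E13 τ = eulerOp^[i] E13Disc (qq τ) := by
    rw [E13_eq_E13Disc_comp_qq]
    exact iterate_nderiv_comp_qq differentiableOn_E13Disc i hτ
  calc odeForm (fun i => nderiv^[i] E13 τ)
      = odeForm (fun i => eulerOp^[i] E13Disc) (qq τ) := by simp only [hE13]; rfl
    _ = qq τ ^ 5 * (p.eval (qq τ) + ψ (qq τ)) := by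
      rw [hodeψ (qq_mem_ball hτ), hp]
      simp only [Polynomial.eval_mul, Polynomial.eval_pow, Polynomial.eval_X, mul_add]

/-! ### Vanishing by the maximum principle -/

section Reduction

variable {N c : ℝ}

lemma exists_int_mul_norm_add_sq_le (hN : 0 ≤ N) {τ : ℂ} (hτ : 0 ≤ τ.im) (hτc : τ.im ≤ c) :
    ∃ n : ℤ, N * ‖τ + n‖ ^ 2 ≤ N * (1 / 4 + c ^ 2) := by
  refine ⟨-round τ.re, mul_le_mul_of_nonneg_left ?_ hN⟩
  have hre : (τ.re - round τ.re) ^ 2 ≤ 1 / 4 := by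
    have := abs_sub_round τ.re
    rw [← sq_abs]
    nlinarith [abs_nonneg (τ.re - round τ.re)]
  have him : τ.im ^ 2 ≤ c ^ 2 := pow_le_pow_left₀ hτ hτc 2
  rw [← normSq_eq_norm_sq, normSq_apply, add_re, add_im, intCast_re, intCast_im, Int.cast_neg,
    add_zero, ← sub_eq_add_neg, ← sq, ← sq]
  exact add_le_add hre him

lemma exists_le_im_eq_of_mul_pow_le {α : Type*} {Φ : ℂ → α} (hN : 0 < N) (hc : 0 < c)
    (hT : ∀ τ : ℂ, 0 < τ.im → ∀ n : ℤ, Φ (τ + n) = Φ τ)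
    (hW : ∀ τ : ℂ, 0 < τ.im → Φ (-1 / (N * τ)) = Φ τ) (n : ℕ) {τ : ℂ} (hτ : 0 < τ.im)
    (hτn : c * (N * (1 / 4 + c ^ 2)) ^ n ≤ τ.im) :
    ∃ σ : ℂ, c ≤ σ.im ∧ Φ σ = Φ τ := by
  induction n generalizing τ with
  | zero => exact ⟨τ, by simpa using hτn, rfl⟩
  | succ n ih =>
    rcases le_total c τ.im with hy | hy
    · exact ⟨τ, hy, rfl⟩
    obtain ⟨m, hm⟩ := exists_int_mul_norm_add_sq_le hN.le hτ.le hy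
    have him : (τ + m).im = τ.im := by simp
    have hτm : 0 < (τ + m).im := him ▸ hτ
    have hnorm := norm_pos_iff.mpr (ne_zero_of_im_pos hτm)
    obtain ⟨σ, hσ, hσΦ⟩ := ih (im_neg_one_div_mul_pos hN hτm) <| by
      rw [im_neg_one_div_mul, le_div_iff₀ (by positivity), him]
      calc c * (N * (1 / 4 + c ^ 2)) ^ n * (N * ‖τ + m‖ ^ 2)
          ≤ c * (N * (1 / 4 + c ^ 2)) ^ n * (N * (1 / 4 + c ^ 2)) := by gcongr
        _ ≤ τ.im := by rwa [mul_assoc, ← pow_succ]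
    exact ⟨σ, hσ, by rw [hσΦ, hW _ hτm, hT _ hτ]⟩

lemma exists_le_im_eq_of_invariant {α : Type*} {Φ : ℂ → α} (hN : 0 < N) (hc : 0 < c)
    (hNc : N * (1 / 4 + c ^ 2) < 1) (hT : ∀ τ : ℂ, 0 < τ.im → ∀ n : ℤ, Φ (τ + n) = Φ τ)
    (hW : ∀ τ : ℂ, 0 < τ.im → Φ (-1 / (N * τ)) = Φ τ) {τ : ℂ} (hτ : 0 < τ.im) :
    ∃ σ : ℂ, c ≤ σ.im ∧ Φ σ = Φ τ := by
  obtain ⟨n, hn⟩ := exists_pow_lt_of_lt_one (div_pos hτ hc) hNc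
  exact exists_le_im_eq_of_mul_pow_le hN hc hT hW n hτ ((lt_div_iff₀' hc).mp hn).le

end Reduction

section MaximumPrinciple

variable {ψ : ℂ → ℂ} {y : ℝ}

lemma exp_neg_two_pi_mul_lt_one (hy : 0 < y) : Real.exp (-(2 * Real.pi * y)) < 1 :=
  Real.exp_lt_one_iff.mpr (neg_lt_zero.mpr (by positivity))

lemma exists_norm_comp_qq_le (hψ : DifferentiableOn ℂ ψ (ball 0 1)) (hy : 0 < y) :
    ∃ K, ∀ τ : ℂ, y ≤ τ.im → ‖ψ (qq τ)‖ ≤ K := by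
  obtain ⟨K, hK⟩ := (isCompact_closedBall (0 : ℂ) _).exists_bound_of_continuousOn
    (hψ.continuousOn.mono (closedBall_subset_ball (exp_neg_two_pi_mul_lt_one hy)))
  refine ⟨K, fun τ hτ => hK _ ?_⟩
  rw [mem_closedBall_zero_iff, norm_qq]
  gcongr

lemma norm_comp_qq_le_of_forall_im_eq (hψ : DifferentiableOn ℂ ψ (ball 0 1)) (hy : 0 < y) {B : ℝ}
    (hB : ∀ σ : ℂ, σ.im = y → ‖ψ (qq σ)‖ ≤ B) {τ : ℂ} (hτ : y ≤ τ.im) : ‖ψ (qq τ)‖ ≤ B := by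
  have hr₀ := (Real.exp_pos (-(2 * Real.pi * y))).ne'
  refine norm_le_of_forall_mem_frontier_norm_le isBounded_ball
    (hψ.diffContOnCl_ball (closedBall_subset_ball (exp_neg_two_pi_mul_lt_one hy)))
    (fun q hq => ?_) ?_
  · rw [frontier_ball _ hr₀, mem_sphere_zero_iff_norm] at hq
    obtain ⟨σ, rfl, hσ⟩ := exists_qq_eq_of_norm_eq hq
    exact hB σ hσ
  · rw [closure_ball _ hr₀, mem_closedBall_zero_iff, norm_qq]
    gcongr

end MaximumPrinciple

lemma strictAntiOn_pow_mul_exp_neg {a : ℝ} (ha : 0 < a) (k : ℕ) :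
    StrictAntiOn (fun y : ℝ => y ^ k * Real.exp (-(a * y))) (Ioi (k / a)) := by
  intro x hx y _ hxy
  have hx₀ : 0 < x := (div_nonneg k.cast_nonneg ha.le).trans_lt hx
  have hyx : y / x ≤ Real.exp ((y - x) / x) := by
    simpa only [sub_div, div_self hx₀.ne', sub_add_cancel] using Real.add_one_le_exp ((y - x) / x)
  have hkx : k / x < a := (div_lt_iff₀ hx₀).mpr ((div_lt_iff₀' ha).mp hx)
  have hexp : k * ((y - x) / x) < a * (y - x) := by
    rw [mul_div_left_comm, mul_comm a]
    exact mul_lt_mul_of_pos_left hkx (sub_pos.mpr hxy)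
  calc y ^ k * Real.exp (-(a * y)) = x ^ k * (y / x) ^ k * Real.exp (-(a * y)) := by
        rw [← mul_pow, mul_div_cancel₀ _ hx₀.ne']
    _ ≤ x ^ k * Real.exp ((y - x) / x) ^ k * Real.exp (-(a * y)) := by
        gcongr
        exact div_nonneg (hx₀.trans hxy).le hx₀.le
    _ = x ^ k * Real.exp (k * ((y - x) / x) + -(a * y)) := by
        rw [← Real.exp_nat_mul, mul_assoc, ← Real.exp_add]
    _ < x ^ k * Real.exp (-(a * x)) := by
        gcongr
        linarith

/-- The Petersson norm `y ^ k ‖F τ‖`, `y = Im τ`, appropriate for forms `F` of weight `2 * k`. -/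
def peterssonNorm (k : ℕ) (F : ℂ → ℂ) (τ : ℂ) : ℝ := τ.im ^ k * ‖F τ‖

section Petersson

variable {F ψ : ℂ → ℂ} {k m : ℕ}

lemma peterssonNorm_nonneg {τ : ℂ} (hτ : 0 < τ.im) : 0 ≤ peterssonNorm k F τ := by
  unfold peterssonNorm
  positivity

lemma peterssonNorm_neg_one_div_mul {N : ℝ} (hN : 0 < N) {τ : ℂ} (hτ : 0 < τ.im)
    (hFW : ‖F (-1 / (N * τ))‖ = N ^ k * ‖τ‖ ^ (2 * k) * ‖F τ‖) :
    peterssonNorm k F (-1 / (N * τ)) = peterssonNorm k F τ := by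
  have hnorm := norm_pos_iff.mpr (ne_zero_of_im_pos hτ)
  rw [peterssonNorm, peterssonNorm, hFW, im_neg_one_div_mul, div_pow, mul_pow, ← pow_mul]
  field

lemma peterssonNorm_eq {τ : ℂ} (hFψ : F τ = qq τ ^ m * ψ (qq τ)) :
    peterssonNorm k F τ =
      τ.im ^ k * Real.exp (-(2 * Real.pi * m * τ.im)) * ‖ψ (qq τ)‖ := by
  rw [peterssonNorm, hFψ, norm_mul, norm_pow, norm_qq, ← Real.exp_nat_mul]
  ring_nf

lemma peterssonNorm_add_int (hFψ : ∀ τ : ℂ, 0 < τ.im → F τ = qq τ ^ m * ψ (qq τ)) {τ : ℂ}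
    (hτ : 0 < τ.im) (n : ℤ) : peterssonNorm k F (τ + n) = peterssonNorm k F τ := by
  have him : (τ + n).im = τ.im := by simp
  rw [peterssonNorm_eq (hFψ τ hτ), peterssonNorm_eq (hFψ _ (him ▸ hτ)), him, qq_add_int]

section Bounds

variable {c : ℝ}

lemma two_pi_mul_pos_and_pos (hkm : k < 2 * Real.pi * m * c) : 0 < 2 * Real.pi * m ∧ 0 < c := by
  have hpos : 0 < 2 * Real.pi * m * c := k.cast_nonneg.trans_lt hkm
  have hc := pos_of_mul_pos_right hpos (by positivity)
  exact ⟨pos_of_mul_pos_left hpos hc.le, hc⟩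

lemma exists_peterssonNorm_le (hkm : k < 2 * Real.pi * m * c)
    (hψ : DifferentiableOn ℂ ψ (ball 0 1))
    (hFψ : ∀ τ : ℂ, 0 < τ.im → F τ = qq τ ^ m * ψ (qq τ)) :
    ∃ B, ∀ τ : ℂ, c ≤ τ.im → peterssonNorm k F τ ≤ B := by
  obtain ⟨ha, hc⟩ := two_pi_mul_pos_and_pos hkm
  have hkc : k / (2 * Real.pi * m) < c := (div_lt_iff₀' ha).mpr hkm
  obtain ⟨K, hK⟩ := exists_norm_comp_qq_le hψ hc
  refine ⟨c ^ k * Real.exp (-(2 * Real.pi * m * c)) * K, fun τ hτ => ?_⟩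
  rw [peterssonNorm_eq (hFψ τ (hc.trans_le hτ))]
  exact mul_le_mul ((strictAntiOn_pow_mul_exp_neg ha k).antitoneOn hkc (hkc.trans_le hτ) hτ)
    (hK τ hτ) (norm_nonneg _) (by positivity)

lemma exists_lt_one_peterssonNorm_le_mul (hkm : k < 2 * Real.pi * m * c)
    (hψ : DifferentiableOn ℂ ψ (ball 0 1))
    (hFψ : ∀ τ : ℂ, 0 < τ.im → F τ = qq τ ^ m * ψ (qq τ)) :
    ∃ ρ < 1, ∀ M, (∀ τ : ℂ, 0 < τ.im → peterssonNorm k F τ ≤ M) →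
      ∀ τ : ℂ, c ≤ τ.im → peterssonNorm k F τ ≤ ρ * M := by
  set a := 2 * Real.pi * m
  obtain ⟨ha, hc⟩ : 0 < a ∧ 0 < c := two_pi_mul_pos_and_pos hkm
  obtain ⟨y, hky, hyc⟩ := exists_between ((div_lt_iff₀' ha).mpr hkm)
  have hy : 0 < y := (div_nonneg k.cast_nonneg ha.le).trans_lt hky
  have hanti := strictAntiOn_pow_mul_exp_neg ha k
  set w : ℝ → ℝ := fun y => y ^ k * Real.exp (-(a * y))
  have hw {y : ℝ} (hy : 0 < y) : 0 < w y := by positivity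
  refine ⟨w c / w y, (div_lt_one (hw hy)).mpr (hanti hky (hky.trans hyc) hyc), fun M hM τ hτ => ?_⟩
  have hψM : ‖ψ (qq τ)‖ ≤ M / w y := by
    refine norm_comp_qq_le_of_forall_im_eq hψ hy (fun σ hσ => ?_) (hyc.le.trans hτ)
    have hσ₀ : 0 < σ.im := hσ ▸ hy
    rw [le_div_iff₀' (hw hy), ← hσ, ← peterssonNorm_eq (hFψ σ hσ₀)]
    exact hM σ hσ₀
  calc peterssonNorm k F τ = w τ.im * ‖ψ (qq τ)‖ := peterssonNorm_eq (hFψ τ (hc.trans_le hτ))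
    _ ≤ w c * (M / w y) :=
      mul_le_mul (hanti.antitoneOn (hky.trans hyc) (hky.trans (hyc.trans_le hτ)) hτ) hψM
        (norm_nonneg _) (hw hc).le
    _ = w c / w y * M := by ring

end Bounds

theorem eq_zero_of_norm_neg_one_div_mul {N c : ℝ} (hN : 0 < N) (hNc : N * (1 / 4 + c ^ 2) < 1)
    (hkm : k < 2 * Real.pi * m * c) (hψ : DifferentiableOn ℂ ψ (ball 0 1))
    (hFψ : ∀ τ : ℂ, 0 < τ.im → F τ = qq τ ^ m * ψ (qq τ))
    (hFW : ∀ τ : ℂ, 0 < τ.im → ‖F (-1 / (N * τ))‖ = N ^ k * ‖τ‖ ^ (2 * k) * ‖F τ‖)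
    {τ : ℂ} (hτ : 0 < τ.im) : F τ = 0 := by
  have hc := (two_pi_mul_pos_and_pos hkm).2
  have hred (τ : ℂ) (hτ : 0 < τ.im) :
      ∃ σ : ℂ, c ≤ σ.im ∧ peterssonNorm k F σ = peterssonNorm k F τ :=
    exists_le_im_eq_of_invariant hN hc hNc (fun _ hτ n => peterssonNorm_add_int hFψ hτ n)
      (fun τ hτ => peterssonNorm_neg_one_div_mul hN hτ (hFW τ hτ)) hτ
  obtain ⟨B, hB⟩ := exists_peterssonNorm_le hkm hψ hFψ
  obtain ⟨ρ, hρ, hρM⟩ := exists_lt_one_peterssonNorm_le_mul hkm hψ hFψ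
  obtain ⟨M, hM⟩ := Real.exists_isLUB (s := peterssonNorm k F '' upperHalfPlaneSet)
    ⟨_, mem_image_of_mem _ hτ⟩ ⟨B, forall_mem_image.mpr fun τ hτ => by
      obtain ⟨σ, hσ, hστ⟩ := hred τ hτ
      exact hστ ▸ hB σ hσ⟩
  have hle (τ : ℂ) (hτ : 0 < τ.im) : peterssonNorm k F τ ≤ M := hM.1 (mem_image_of_mem _ hτ)
  have hM_le : M ≤ ρ * M := hM.2 <| forall_mem_image.mpr fun τ hτ => by
    obtain ⟨σ, hσ, hστ⟩ := hred τ hτ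
    exact hστ ▸ hρM M hle σ hσ
  have hM_nonpos : M ≤ 0 := by nlinarith
  have hnorm : peterssonNorm k F τ = 0 :=
    ((hle τ hτ).trans hM_nonpos).antisymm (peterssonNorm_nonneg hτ)
  exact norm_eq_zero.mp ((mul_eq_zero.mp hnorm).resolve_left (pow_pos hτ k).ne')

end Petersson
/-! ### The differential equation -/

lemma norm_odeForm_E13_neg_one_div {τ : ℂ} (hτ : 0 < τ.im) :
    ‖odeForm fun i => nderiv^[i] E13 (-1 / ((3 : ℝ) * τ))‖ =
      3 ^ 8 * ‖τ‖ ^ 16 * ‖odeForm fun i => nderiv^[i] E13 τ‖ := by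
  have hsqrt : √3 ^ 4 = 3 ^ 2 := by rw [pow_mul √3 2 2, Real.sq_sqrt zero_le_three]
  rw [odeForm_neg_one_div_mul differentiableOn_E13 three_pos (fun _ => E13_neg_one_div) hτ]
  simp only [norm_mul, norm_pow, norm_neg, norm_I, one_mul, norm_real, Real.norm_eq_abs,
    abs_of_nonneg (Real.sqrt_nonneg 3), hsqrt, Nat.abs_ofNat]
  norm_num

/-- The Eisenstein series `E_{1,3}` satisfies a fourth-order nonlinear ODE. -/
theorem E13_fourth_order_ODE :
    ∀ τ : ℂ, 0 < τ.im →
      E13 τ * nderiv (nderiv (nderiv (nderiv E13))) τ *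
        (E13 τ * nderiv (nderiv E13) τ - 2 * (nderiv E13 τ) ^ 2) -
      E13 τ ^ 2 * (nderiv (nderiv (nderiv E13)) τ) ^ 2 +
      2 * nderiv E13 τ * (E13 τ * nderiv (nderiv E13) τ + 4 * (nderiv E13 τ) ^ 2) *
        nderiv (nderiv (nderiv E13)) τ -
      9 * (nderiv E13 τ) ^ 2 * (nderiv (nderiv E13) τ) ^ 2 = 0 := by
  intro τ hτ
  obtain ⟨ψ, hψ, hodeψ⟩ := exists_odeForm_E13_eq_qq_pow_five_mul
  have hπ : ((8 : ℕ) : ℝ) < 2 * Real.pi * (5 : ℕ) * 0.27 := by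
    have := Real.pi_gt_three
    push_cast
    linarith
  exact eq_zero_of_norm_neg_one_div_mul (F := fun τ => odeForm fun i => nderiv^[i] E13 τ)
    three_pos (by norm_num) hπ hψ hodeψ (fun _ => norm_odeForm_E13_neg_one_div) hτ
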